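/- Let K be a number field, let k ≥ 2 be an integer, and let A : 𝓞_K → 𝓞_K be a ℤ-linear bijection. Then A(V_{K,k}) = V_{K,k} if and only if there exist a field automorphism τ of K and a unit ε ∈ 𝓞_K^× such that A(x) = ε·τ(x) for all x ∈ 𝓞_K. (Note that any field automorphism τ of K maps 𝓞_K onto 𝓞_K.) -/

import Mathlib

/-!
A sieve shows that, for every large rational prime `p`, a class `a + p ^ k 𝓞 L` contains a `k`-free
element as soon as `a ∉ Q ^ k` for all `Q ∣ p`. Hence, if `A : 𝓞 K → 𝓞 L` is a linear bijection
whose image of the `k`-free elements contains all `k`-free elements, then `A (P ^ k)` is covered by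
the `Q ^ k` with `Q ∣ p` whenever `P ∣ p`. There are fewer than `p` such `Q`, so a single one
suffices: `A (P ^ k) ⊆ Q ^ k`, and since `p` is unramified in `L` even `A P ⊆ Q`.

If moreover `P` has degree one, then `x` and `y` are congruent to integers modulo `P`, which gives
`A (x * y) * A 1 ≡ A x * A y` modulo `Q`. There are infinitely many such `P`, so this is an
equality, and `A / A 1` is a ring isomorphism.
-/

open NumberField

/-- The set of `k`-free integers of a number field `K`: elements of the ring of
integers not lying in `𝔭^k` for any nonzero prime ideal `𝔭`. -/
def kfreeSet (K : Type*) [Field K] [NumberField K] (k : ℕ) : Set (𝓞 K) :=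
  {x | ∀ P : Ideal (𝓞 K), P.IsPrime → P ≠ ⊥ → x ∉ P ^ k}

/-! ### Primes above a rational prime -/

section PrimesAbove

variable {R : Type*} [CommRing R]

theorem intCast_mem_iff_dvd {P : Ideal R} (hP : P.IsPrime) {p : ℕ} (hp : p.Prime)
    (hpP : (p : R) ∈ P) {m : ℤ} : (m : R) ∈ P ↔ (p : ℤ) ∣ m := by
  have hover := (Ideal.liesOver_span_iff (P := P) hP.ne_top
    (Nat.prime_iff_prime_int.1 hp)).2 (by simpa using hpP)
  rw [← Ideal.mem_span_singleton, hover.over, Ideal.mem_under]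
  simp

theorem ne_bot_of_natCast_mem [CharZero R] {I : Ideal R} {n : ℕ} (hn : n ≠ 0)
    (hnI : (n : R) ∈ I) : I ≠ ⊥ := by
  rintro rfl
  exact hn (by simpa using hnI)

theorem exists_isPrime_natCast_mem (R : Type*) [CommRing R] [CharZero R] [Algebra.IsIntegral ℤ R]
    {p : ℕ} (hp : p.Prime) : ∃ P : Ideal R, P.IsPrime ∧ (p : R) ∈ P := by
  have : Fact p.Prime := ⟨hp⟩
  obtain ⟨P, hP, hover⟩ : Nonempty (Ideal.primesOver (Ideal.span {(p : ℤ)}) R) := inferInstance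
  refine ⟨P, hP, ?_⟩
  simpa using (Ideal.liesOver_span_iff hP.ne_top (Nat.prime_iff_prime_int.1 hp)).1 hover

theorem exists_int_mul_sub_one_mem {I : Ideal R} {p : ℕ} (hp : p.Prime) (hpI : (p : R) ∈ I) {m : ℤ}
    (hm : ¬ (p : ℤ) ∣ m) : ∃ u : ℤ, (u : R) * m - 1 ∈ I := by
  obtain ⟨v, u, huv⟩ := (Prime.coprime_iff_not_dvd (Nat.prime_iff_prime_int.1 hp)).2 hm
  have huv' : (v : R) * p + u * m = 1 := by exact_mod_cast congrArg (Int.cast : ℤ → R) huv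
  refine ⟨u, ?_⟩
  rw [show (u : R) * m - 1 = -(v * p) by linear_combination huv']
  exact I.neg_mem (I.mul_mem_left _ hpI)

variable [IsDedekindDomain R]

theorem mem_of_pow_mul_mem_pow_succ {Q : Ideal R} (hQ : Q.IsPrime) (hQ0 : Q ≠ ⊥) {a x : R}
    (ha : a ∉ Q ^ 2) {j : ℕ} (hx : a ^ j * x ∈ Q ^ (j + 1)) : x ∈ Q := by
  by_contra hxQ
  have haj : a ^ j ∈ Q ^ (j + 1) := (Ideal.IsPrime.mem_pow_mul Q hx).resolve_right hxQ
  obtain ⟨J, hJ⟩ : Q ∣ Ideal.span {a} :=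
    Ideal.dvd_span_singleton.2 (hQ.mem_of_pow_mem j (Ideal.pow_le_self j.succ_ne_zero haj))
  have hprime : Prime Q := Ideal.prime_of_isPrime hQ0 hQ
  have hdvd : Q ^ j * Q ∣ Q ^ j * J ^ j := by
    rwa [← pow_succ, ← mul_pow, ← hJ, Ideal.span_singleton_pow, Ideal.dvd_span_singleton]
  have hQJ : Q ∣ J :=
    hprime.dvd_of_dvd_pow ((mul_dvd_mul_iff_left (pow_ne_zero _ hprime.ne_zero)).1 hdvd)
  refine ha (Ideal.dvd_span_singleton.1 ?_)
  rw [hJ, sq]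
  exact mul_dvd_mul_left _ hQJ

variable [Module.Finite ℤ R]

theorem exists_prime_natCast_mem {P : Ideal R} (hP : P.IsPrime) (hP0 : P ≠ ⊥) :
    ∃ p : ℕ, p.Prime ∧ (p : R) ∈ P := by
  have : NeZero P := ⟨hP0⟩
  exact ⟨_, Nat.absNorm_under_prime P, by simpa using Int.absNorm_under_mem P⟩

variable [Module.Free ℤ R]

theorem pow_le_abs_norm_of_mem_pow {P : Ideal R} (hP : P.IsPrime) {p : ℕ} (hp : p.Prime)
    (hpP : (p : R) ∈ P) {j : ℕ} {z : R} (hz : z ∈ P ^ j) (hz0 : z ≠ 0) :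
    (p : ℤ) ^ j ≤ |Algebra.norm ℤ z| := by
  have hdvd : p ∣ Ideal.absNorm P := by
    rw [← Int.natCast_dvd_natCast, ← intCast_mem_iff_dvd hP hp hpP]
    simpa using Ideal.absNorm_mem P
  have hdvd_norm : (p : ℤ) ^ j ∣ Algebra.norm ℤ z :=
    (pow_dvd_pow_of_dvd (Int.natCast_dvd_natCast.2 hdvd) j).trans
      (by simpa using Ideal.absNorm_dvd_norm_of_mem hz)
  exact Int.le_of_dvd (abs_pos.2 (by rwa [Ne, Algebra.norm_eq_zero_iff]))
    ((dvd_abs _ _).2 hdvd_norm)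

theorem mem_primesOverFinset_span_iff {p : ℕ} (hp : p.Prime) {P : Ideal R} :
    P ∈ IsDedekindDomain.primesOverFinset (Ideal.span {(p : ℤ)}) R ↔ P.IsPrime ∧ (p : R) ∈ P := by
  have : Fact p.Prime := ⟨hp⟩
  have := Int.ideal_span_isMaximal_of_prime p
  rw [IsDedekindDomain.mem_primesOverFinset_iff (by simpa using hp.ne_zero)]
  refine and_congr_right fun hP => ?_
  rw [Ideal.liesOver_span_iff hP.ne_top (Nat.prime_iff_prime_int.1 hp)]
  simp

theorem card_primesOverFinset_span_le {p : ℕ} (hp : p.Prime) :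
    (IsDedekindDomain.primesOverFinset (Ideal.span {(p : ℤ)}) R).card ≤ Module.finrank ℤ R := by
  have : Fact p.Prime := ⟨hp⟩
  have := Int.ideal_span_isMaximal_of_prime p
  have hp0 : Ideal.span {(p : ℤ)} ≠ ⊥ := by simpa using hp.ne_zero
  rw [← Ideal.sum_ramification_inertia_eq_finrank (Ideal.span {(p : ℤ)}) R, ← Set.ncard_coe_finset,
    IsDedekindDomain.coe_primesOverFinset hp0, ← Nat.card_coe_set_eq, Nat.card_eq_fintype_card,
    ← Finset.card_univ, Finset.card_eq_sum_ones]
  exact Finset.sum_le_sum fun P _ => Nat.mul_pos (P.1.ramificationIdx_pos ℤ) (P.1.inertiaDeg_pos ℤ)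

end PrimesAbove

theorem dvd_discr_of_mem_sq {K : Type*} [Field K] [NumberField K] {P : Ideal (𝓞 K)}
    (hP : P.IsPrime) {p : ℕ} (hp : p.Prime) (hpP : (p : 𝓞 K) ∈ P ^ 2) : (p : ℤ) ∣ discr K := by
  have : Fact p.Prime := ⟨hp⟩
  have := Int.ideal_span_isMaximal_of_prime p
  have hsq : P ^ 2 ∣ (Ideal.span {(p : ℤ)}).map (algebraMap ℤ (𝓞 K)) := by
    simpa [Ideal.dvd_iff_le, Ideal.map_span] using hpP
  have hdiff : P ∣ differentIdeal ℤ (𝓞 K) := by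
    simpa using pow_sub_one_dvd_differentIdeal ℤ P 2 (by simpa using hp.ne_zero) hsq
  rw [← Int.dvd_natAbs, ← absNorm_differentIdeal K (𝓞 K),
    ← intCast_mem_iff_dvd hP hp (Ideal.pow_le_self two_ne_zero hpP)]
  exact_mod_cast Ideal.le_of_dvd hdiff (Ideal.absNorm_mem _)

/-! ### Counting lattice points with large norm differences -/

section Packing

variable {ι M : Type*} [Fintype ι] [DecidableEq ι] [AddCommGroup M]

/-- The points of a lattice whose coordinates in the basis `w` all lie in `[0, X)`: the finite box
over which the sieve counts. -/
noncomputable def coordBox (w : Module.Basis ι ℤ M) (X : ℕ) : Finset M :=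
  (Fintype.piFinset fun _ => Finset.Ico (0 : ℤ) X).map w.equivFun.symm.toEquiv.toEmbedding

theorem mem_coordBox {w : Module.Basis ι ℤ M} {X : ℕ} {x : M} :
    x ∈ coordBox w X ↔ ∀ i, 0 ≤ w.repr x i ∧ w.repr x i < X := by
  rw [coordBox, Finset.mem_map_equiv, Fintype.mem_piFinset]
  simp

theorem card_coordBox (w : Module.Basis ι ℤ M) (X : ℕ) :
    (coordBox w X).card = X ^ Fintype.card ι := by
  simp [coordBox]

theorem card_le_of_separated (w : Module.Basis ι ℤ M) {X : ℕ} {T : Finset M}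
    (hT : T ⊆ coordBox w X) {s : ℝ} (hs : 0 < s)
    (hsep : ∀ x ∈ T, ∀ y ∈ T, (∀ i, |(w.repr (x - y) i : ℝ)| < s) → x = y) :
    T.card ≤ ⌈X / s⌉₊ ^ Fintype.card ι := by
  let cell (x : M) (i : ι) : ℤ := ⌊(w.repr x i : ℝ) / s⌋
  have hbox {x : M} (hx : x ∈ T) (i : ι) : 0 ≤ (w.repr x i : ℝ) ∧ (w.repr x i : ℝ) < X := by
    exact_mod_cast mem_coordBox.1 (hT hx) i
  have hmaps : Set.MapsTo cell T (Fintype.piFinset fun _ : ι => Finset.Ico 0 ⌈X / s⌉) := by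
    intro x hx
    refine Finset.mem_coe.2 <| Fintype.mem_piFinset.2 fun i => Finset.mem_Ico.2 ⟨?_, ?_⟩
    · exact Int.floor_nonneg.2 (div_nonneg (hbox hx i).1 hs.le)
    · exact Int.lt_ceil.2 <| (Int.floor_le _).trans_lt (div_lt_div_of_pos_right (hbox hx i).2 hs)
  have hinj : Set.InjOn cell T := by
    intro x hx y hy hxy
    refine hsep x hx y hy fun i => ?_
    have hlt := Int.abs_sub_lt_one_of_floor_eq_floor (congrFun hxy i)
    rw [← sub_div, abs_div, abs_of_pos hs, div_lt_one hs] at hlt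
    simpa using hlt
  simpa [Int.ceil_toNat] using Finset.card_le_card_of_injOn cell hmaps hinj

variable {S : Type*} [CommRing S] [IsDomain S]

/-- A constant `C` such that at most `C * X ^ n / m + 1` points of a coordinate box of side `X` in a
ring of rank `n` have pairwise differences of norm at least `m`. The factor
`ClassGroup.normBound` bounds norms in terms of coordinates, and `2 ^ n` pays for rounding up the
number of cells. -/
noncomputable def packingConst (w : Module.Basis ι ℤ S) : ℝ :=
  2 ^ Fintype.card ι * (ClassGroup.normBound AbsoluteValue.abs w : ℤ)

theorem packingConst_pos (w : Module.Basis ι ℤ S) : 0 < packingConst w :=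
  mul_pos (by positivity) (by exact_mod_cast ClassGroup.normBound_pos AbsoluteValue.abs w)

theorem card_le_of_le_norm_sub (w : Module.Basis ι ℤ S) {X : ℕ} {T : Finset S}
    (hT : T ⊆ coordBox w X) {m : ℝ} (hm : 0 < m)
    (hsep : ∀ x ∈ T, ∀ y ∈ T, x ≠ y → m ≤ |(Algebra.norm ℤ (x - y) : ℝ)|) :
    (T.card : ℝ) ≤ packingConst w * X ^ Fintype.card ι / m + 1 := by
  set n := Fintype.card ι
  set C := ((ClassGroup.normBound AbsoluteValue.abs w : ℤ) : ℝ)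
  have hC : 0 < C := Int.cast_pos.2 (ClassGroup.normBound_pos AbsoluteValue.abs w)
  have := w.index_nonempty
  have hn : n ≠ 0 := Fintype.card_ne_zero
  set s : ℝ := (m / C) ^ (n : ℝ)⁻¹
  have hs : 0 < s := by positivity
  have hsn : s ^ n = m / C := Real.rpow_inv_natCast_pow (by positivity) hn
  have hcard : (T.card : ℝ) ≤ (⌈X / s⌉₊ : ℝ) ^ n := by
    refine mod_cast card_le_of_separated w hT hs fun x hx y hy hlt => ?_
    by_contra hxy
    have hnorm := ClassGroup.norm_lt AbsoluteValue.abs w (x - y) (y := s) (by simpa using hlt)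
    have hnorm' : |(Algebra.norm ℤ (x - y) : ℝ)| < C * s ^ n := by simpa using hnorm
    rw [hsn, mul_div_cancel₀ _ hC.ne'] at hnorm'
    exact (hsep x hx y hy hxy).not_gt hnorm'
  rcases le_or_gt (X : ℝ) s with hXs | hXs
  · have hceil : (⌈X / s⌉₊ : ℝ) ≤ 1 := by
      exact_mod_cast Nat.ceil_le.2 (by simpa using div_le_one_of_le₀ hXs hs.le)
    refine (hcard.trans (pow_le_one₀ (by positivity) hceil)).trans ?_
    have := packingConst_pos w
    exact le_add_of_nonneg_left (by positivity)
  · have hceil : (⌈X / s⌉₊ : ℝ) ≤ 2 * (X / s) := by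
      linarith [Nat.ceil_lt_add_one (show 0 ≤ X / s by positivity), (one_lt_div hs).2 hXs]
    calc (T.card : ℝ) ≤ (2 * (X / s)) ^ n := hcard.trans (by gcongr)
      _ = packingConst w * X ^ n / m := by
        rw [mul_pow, div_pow, hsn, show packingConst w = 2 ^ n * C from rfl]
        field_simp
      _ ≤ _ := by linarith

theorem exists_abs_norm_add_mul_le (w : Module.Basis ι ℤ S) (b : S) (N : ℕ) :
    ∃ D : ℕ, ∀ X ≠ 0, ∀ y ∈ coordBox w X,
      |Algebra.norm ℤ (b + N * y)| ≤ D * X ^ Fintype.card ι := by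
  lift ClassGroup.normBound AbsoluteValue.abs w to ℕ using
    (ClassGroup.normBound_pos AbsoluteValue.abs w).le with C hC
  set β : ℕ := ∑ i, (w.repr b i).natAbs
  refine ⟨C * (β + N) ^ Fintype.card ι, fun X hX y hy => ?_⟩
  have hX1 : (1 : ℤ) ≤ X := by exact_mod_cast Nat.one_le_iff_ne_zero.2 hX
  have hcoord (i : ι) : |w.repr (b + N * y) i| ≤ (β + N) * X := by
    obtain ⟨hy0, hyX⟩ := mem_coordBox.1 hy i
    have hb : |w.repr b i| ≤ β := by
      rw [Int.abs_eq_natAbs]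
      exact_mod_cast Finset.single_le_sum (f := fun i => (w.repr b i).natAbs)
        (fun _ _ => Nat.zero_le _) (Finset.mem_univ i)
    calc |w.repr (b + N * y) i| = |w.repr b i + N * w.repr y i| := by
          simp only [← nsmul_eq_mul, map_add, map_nsmul, Finsupp.add_apply, Finsupp.smul_apply]
      _ ≤ |w.repr b i| + N * w.repr y i := by
          refine (abs_add_le _ _).trans_eq ?_
          rw [abs_of_nonneg (mul_nonneg N.cast_nonneg hy0)]
      _ ≤ β * X + N * X := by
        gcongr
        nlinarith
      _ = _ := by ring
  have := ClassGroup.norm_le AbsoluteValue.abs w (b + N * y) hcoord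
  rw [← hC] at this
  simpa [mul_pow, mul_assoc] using this

end Packing

/-! ### The square-free sieve -/

section Sieve

variable {R ι : Type*} [CommRing R]

/-- `z` is divisible by the square of some prime above the rational prime `p`: the event that the
sieve excludes at `p`. -/
def SqDivisibleAbove (p : ℕ) (z : R) : Prop :=
  ∃ P : Ideal R, P.IsPrime ∧ (p : R) ∈ P ∧ z ∈ P ^ 2

variable [IsDedekindDomain R] [Module.Free ℤ R] [Module.Finite ℤ R]

theorem exists_prime_sqDivisibleAbove {P : Ideal R} (hP : P.IsPrime) (hP0 : P ≠ ⊥) {z : R}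
    (hz : z ∈ P ^ 2) (hz0 : z ≠ 0) {N Q : ℕ} (hN : (N : R) ∉ P)
    (hQ : |Algebra.norm ℤ z| ≤ (Q : ℤ) ^ 2) :
    ∃ p ≤ Q, (p.Prime ∧ ¬ p ∣ N) ∧ SqDivisibleAbove p z := by
  obtain ⟨p, hp, hpP⟩ := exists_prime_natCast_mem hP hP0
  have hpQ := abs_le_of_sq_le_sq ((pow_le_abs_norm_of_mem_pow hP hp hpP hz hz0).trans hQ)
    (Nat.cast_nonneg Q)
  exact ⟨p, mod_cast hpQ, ⟨hp, fun h => hN (P.mem_of_dvd (Nat.cast_dvd_cast h) hpP)⟩,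
    P, hP, hpP, hz⟩

variable [Fintype ι] [DecidableEq ι]

open Classical in
theorem card_filter_mem_sq_le (w : Module.Basis ι ℤ R) {P : Ideal R} (hP : P.IsPrime) {p : ℕ}
    (hp : p.Prime) (hpP : (p : R) ∈ P) {N : R} (hN : N ∉ P) (b : R) (X : ℕ) :
    ({y ∈ coordBox w X | b + N * y ∈ P ^ 2}.card : ℝ) ≤
      packingConst w * X ^ Fintype.card ι / (p : ℝ) ^ 2 + 1 := by
  have hp0 : (0 : ℝ) < p := mod_cast hp.pos
  refine card_le_of_le_norm_sub w (Finset.filter_subset _ _) (by positivity) ?_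
  intro x hx y hy hxy
  have hmem : N * (x - y) ∈ P ^ 2 := by
    convert (P ^ 2).sub_mem (Finset.mem_filter.1 hx).2 (Finset.mem_filter.1 hy).2 using 1
    ring
  exact_mod_cast pow_le_abs_norm_of_mem_pow hP hp hpP
    ((Ideal.IsPrime.mul_mem_pow P hmem).resolve_left hN) (sub_ne_zero.2 hxy)

open Classical in
theorem card_filter_sqDivisibleAbove_le (w : Module.Basis ι ℤ R) {p : ℕ} (hp : p.Prime) {N : ℕ}
    (hN : ¬ p ∣ N) (b : R) (X : ℕ) :
    ({y ∈ coordBox w X | SqDivisibleAbove p (b + N * y)}.card : ℝ) ≤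
      Fintype.card ι * (packingConst w * X ^ Fintype.card ι / (p : ℝ) ^ 2 + 1) := by
  set S := IsDedekindDomain.primesOverFinset (Ideal.span {(p : ℤ)}) R
  let multiples (P : Ideal R) : Finset R := {y ∈ coordBox w X | b + N * y ∈ P ^ 2}
  have hsub : {y ∈ coordBox w X | SqDivisibleAbove p (b + N * y)} ⊆ S.biUnion multiples := by
    intro y hy
    obtain ⟨hyX, P, hP, hpP, hyP⟩ := Finset.mem_filter.1 hy
    exact Finset.mem_biUnion.2 ⟨P, (mem_primesOverFinset_span_iff hp).2 ⟨hP, hpP⟩,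
      Finset.mem_filter.2 ⟨hyX, hyP⟩⟩
  have hS : (S.card : ℝ) ≤ Fintype.card ι := by
    rw [← Module.finrank_eq_card_basis w]
    exact mod_cast card_primesOverFinset_span_le hp
  have hmultiples : ∀ P ∈ S, ((multiples P).card : ℝ) ≤
      packingConst w * X ^ Fintype.card ι / (p : ℝ) ^ 2 + 1 := fun P hPS => by
    obtain ⟨hP, hpP⟩ := (mem_primesOverFinset_span_iff hp).1 hPS
    refine card_filter_mem_sq_le w hP hp hpP (fun h => hN ?_) b X
    exact_mod_cast (intCast_mem_iff_dvd hP hp hpP (m := N)).1 (by exact_mod_cast h)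
  have hc := packingConst_pos w
  calc _ ≤ ((S.biUnion multiples).card : ℝ) := by exact_mod_cast Finset.card_le_card hsub
    _ ≤ ∑ P ∈ S, ((multiples P).card : ℝ) := by exact_mod_cast Finset.card_biUnion_le
    _ ≤ S.card * (packingConst w * X ^ Fintype.card ι / (p : ℝ) ^ 2 + 1) := by
        simpa only [nsmul_eq_mul] using Finset.sum_le_card_nsmul S _ _ hmultiples
    _ ≤ _ := by gcongr

open Classical in
theorem card_filter_exists_sqDivisibleAbove_le (w : Module.Basis ι ℤ R) {B Q : ℕ} (hB : B ≠ 0)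
    (N : ℕ) (b : R) (X : ℕ) :
    ({y ∈ coordBox w X | ∃ p ∈ Finset.Ioc B Q, (p.Prime ∧ ¬ p ∣ N) ∧
        SqDivisibleAbove p (b + N * y)}.card : ℝ) ≤
      Fintype.card ι * (packingConst w * X ^ Fintype.card ι / B + Q) := by
  set n := Fintype.card ι
  let bad (p : ℕ) : Finset R := {y ∈ coordBox w X | SqDivisibleAbove p (b + N * y)}
  let primes : Finset ℕ := {p ∈ Finset.Ioc B Q | p.Prime ∧ ¬ p ∣ N}
  have hsub : {y ∈ coordBox w X | ∃ p ∈ Finset.Ioc B Q, (p.Prime ∧ ¬ p ∣ N) ∧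
      SqDivisibleAbove p (b + N * y)} ⊆ primes.biUnion bad := by
    intro y hy
    obtain ⟨hyX, p, hpQ, hp, hyp⟩ := Finset.mem_filter.1 hy
    exact Finset.mem_biUnion.2 ⟨p, Finset.mem_filter.2 ⟨hpQ, hp⟩, Finset.mem_filter.2 ⟨hyX, hyp⟩⟩
  have hbad {p : ℕ} (hp : p ∈ primes) :
      ((bad p).card : ℝ) ≤ n * (packingConst w * X ^ n * ((p : ℝ) ^ 2)⁻¹ + 1) := by
    obtain ⟨-, hp, hpN⟩ := Finset.mem_filter.1 hp
    simpa only [div_eq_mul_inv] using card_filter_sqDivisibleAbove_le w hp hpN b X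
  have hsum : ∑ p ∈ Finset.Ioc B Q, ((p : ℝ) ^ 2)⁻¹ ≤ (B : ℝ)⁻¹ := by
    rcases le_or_gt B Q with hBQ | hBQ
    · exact (sum_Ioc_inv_sq_le_sub hB hBQ).trans (sub_le_self _ (by positivity))
    · simp [Finset.Ioc_eq_empty_of_le hBQ.le]
  have hc := packingConst_pos w
  calc _ ≤ ((primes.biUnion bad).card : ℝ) := by exact_mod_cast Finset.card_le_card hsub
    _ ≤ ∑ p ∈ primes, ((bad p).card : ℝ) := by exact_mod_cast Finset.card_biUnion_le
    _ ≤ ∑ p ∈ primes, n * (packingConst w * X ^ n * ((p : ℝ) ^ 2)⁻¹ + 1) :=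
        Finset.sum_le_sum fun p => hbad
    _ ≤ ∑ p ∈ Finset.Ioc B Q, n * (packingConst w * X ^ n * ((p : ℝ) ^ 2)⁻¹ + 1) :=
        Finset.sum_le_sum_of_subset_of_nonneg (Finset.filter_subset _ _)
          fun _ _ _ => by positivity
    _ = n * (packingConst w * X ^ n * ∑ p ∈ Finset.Ioc B Q, ((p : ℝ) ^ 2)⁻¹ + (Q - B : ℕ)) := by
        rw [← Finset.mul_sum, Finset.sum_add_distrib, ← Finset.mul_sum]
        simp
    _ ≤ n * (packingConst w * X ^ n * (B : ℝ)⁻¹ + Q) := by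
        gcongr
        exact Nat.sub_le Q B
    _ = _ := by rw [div_eq_mul_inv]

theorem mul_div_add_mul_lt_sq {n c B D t : ℝ} (hB : 0 < B) (hcB : 2 * n * c ≤ B) (ht : 0 < t)
    (hDt : 2 * n * D < t) : n * (c * t ^ 2 / B + D * t) < t ^ 2 := by
  have hhalf : n * (c * t ^ 2 / B) ≤ t ^ 2 / 2 := by
    rw [← mul_div_assoc, div_le_iff₀ hB]
    nlinarith [sq_nonneg t]
  nlinarith

-- The box has side `T ^ 2`: primes up to `Q = D * T ^ n` suffice, since norms are at most `Q ^ 2`,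
-- and the error term `n * Q` is still negligible against the `T ^ (2 * n)` points of the box.
theorem exists_forall_add_mul_notMem_sq (R : Type*) [CommRing R] [IsDedekindDomain R]
    [Module.Free ℤ R] [Module.Finite ℤ R] :
    ∃ B : ℕ, ∀ N : ℕ, (∀ p, p.Prime → p ≤ B → p ∣ N) → ∀ b : R, ¬ (N : R) ∣ b →
      ∃ y, ∀ P : Ideal R, P.IsPrime → P ≠ ⊥ → (N : R) ∉ P → b + N * y ∉ P ^ 2 := by
  classical
  let w := Module.Free.chooseBasis ℤ R
  set n := Fintype.card (Module.Free.ChooseBasisIndex ℤ R)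
  have hn : n ≠ 0 := have := w.index_nonempty; Fintype.card_ne_zero
  have hc := packingConst_pos w
  obtain ⟨B, hB⟩ := exists_nat_ge (2 * n * packingConst w)
  have hB0 : (0 : ℝ) < B := lt_of_lt_of_le (by positivity) hB
  refine ⟨B, fun N hN b hb => ?_⟩
  obtain ⟨D, hD⟩ := exists_abs_norm_add_mul_le w b N
  set T : ℕ := 2 * n * D + 1
  set Q : ℕ := D * T ^ n
  by_contra! hbad
  have hcover : coordBox w (T ^ 2) ⊆ {y ∈ coordBox w (T ^ 2) | ∃ p ∈ Finset.Ioc B Q,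
      (p.Prime ∧ ¬ p ∣ N) ∧ SqDivisibleAbove p (b + N * y)} := by
    intro y hy
    obtain ⟨P, hP, hP0, hNP, hyP⟩ := hbad y
    have hne : b + N * y ≠ 0 := fun h => hb ⟨-y, by linear_combination h⟩
    have hnorm : |Algebra.norm ℤ (b + N * y)| ≤ (Q : ℤ) ^ 2 := by
      refine (hD _ (by positivity) y hy).trans ?_
      norm_cast
      rw [mul_pow, ← pow_mul, ← pow_mul, mul_comm n]
      gcongr
      exact Nat.le_self_pow two_ne_zero D
    obtain ⟨p, hpQ, hp, hyp⟩ := exists_prime_sqDivisibleAbove hP hP0 hyP hne hNP hnorm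
    exact Finset.mem_filter.2
      ⟨hy, p, Finset.mem_Ioc.2 ⟨not_le.1 (mt (hN p hp.1) hp.2), hpQ⟩, hp, hyp⟩
  have hcount : ((T : ℝ) ^ n) ^ 2 ≤ n * (packingConst w * ((T : ℝ) ^ n) ^ 2 / B + D * T ^ n) := by
    have := (Nat.cast_le (α := ℝ).2 (Finset.card_le_card hcover)).trans
      (card_filter_exists_sqDivisibleAbove_le w (by exact_mod_cast hB0.ne') N b (T ^ 2))
    simpa only [card_coordBox, Q, Nat.cast_mul, Nat.cast_pow, pow_right_comm] using this
  have hT : 2 * n * D < (T : ℝ) ^ n := by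
    exact_mod_cast (Nat.lt_succ_self (2 * n * D)).trans_le (Nat.le_self_pow hn T)
  exact (mul_div_add_mul_lt_sq hB0 hB (by positivity) hT).not_ge hcount

end Sieve

/-! ### Primes of degree one -/

section DegreeOne

open IntermediateField in
theorem exists_ne_zero_adjoin_eq_top (K : Type*) [Field K] [NumberField K] :
    ∃ α : 𝓞 K, α ≠ 0 ∧ ℚ⟮(α : K)⟯ = ⊤ := by
  obtain ⟨β, hβ⟩ := Field.exists_primitive_element ℚ K
  by_cases hβ0 : β = 0
  · exact ⟨1, one_ne_zero, by rw [← hβ, hβ0]; simp⟩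
  have halg : IsAlgebraic ℤ β :=
    (IsFractionRing.isAlgebraic_iff ℤ ℚ K).2 (Algebra.IsAlgebraic.isAlgebraic β)
  obtain ⟨c, hc0, hc⟩ := halg.exists_integral_multiple
  refine ⟨⟨c • β, hc⟩, fun h => smul_ne_zero hc0 hβ0 (congrArg Subtype.val h), ?_⟩
  rw [eq_top_iff, ← hβ, adjoin_simple_le_iff]
  simpa [← Int.cast_smul_eq_zsmul ℚ, hc0] using
    smul_mem _ (mem_adjoin_simple_self ℚ (c • β)) (x := (c : ℚ)⁻¹)

variable {K : Type*} [Field K] [NumberField K]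

open IntermediateField in
theorem exists_ne_zero_intCast_mem_conductor {α : 𝓞 K} (hα : ℚ⟮(α : K)⟯ = ⊤) :
    ∃ d : ℤ, d ≠ 0 ∧ (d : 𝓞 K) ∈ conductor ℤ α := by
  have hαint : IsIntegral ℤ (α : K) := RingOfIntegers.isIntegral_coe α
  let B : PowerBasis ℚ K := .ofAdjoinEqTop hαint.tower_top
    (Algebra.adjoin_eq_top_of_primitive_element (Algebra.IsAlgebraic.isAlgebraic _) hα)
  have hB : B.gen = α := PowerBasis.ofAdjoinEqTop_gen _ _
  obtain ⟨d, hd⟩ := IsIntegrallyClosed.isIntegral_iff.1 <|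
    Algebra.discr_isIntegral ℚ (R := ℤ) (b := B.basis) fun i => by
      rw [B.basis_eq_pow, hB]; exact hαint.pow _
  refine ⟨d, fun h => Algebra.discr_not_zero_of_basis ℚ B.basis (by rw [← hd, h, map_zero]), ?_⟩
  refine mem_conductor_iff.2 fun x => ?_
  have hmem := Algebra.discr_mul_isIntegral_mem_adjoin ℚ (B := B) (hB ▸ hαint)
    (RingOfIntegers.isIntegral_coe x)
  rw [hB, ← hd] at hmem
  let f := IsScalarTower.toAlgHom ℤ (𝓞 K) K
  have hmap : (Algebra.adjoin ℤ {α}).map f = Algebra.adjoin ℤ {(α : K)} :=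
    AlgHom.map_adjoin_singleton f α
  rw [← hmap] at hmem
  obtain ⟨y, hy, hyx : (y : K) = _⟩ := hmem
  have hdx : d * x = y := RingOfIntegers.coe_injective <| by
    simpa [Algebra.smul_def] using hyx.symm
  exact hdx ▸ hy

theorem not_isUnit_of_one_lt_norm_embeddings {x : 𝓞 K} (hx : ∀ σ : K →+* ℂ, 1 < ‖σ x‖) :
    ¬ IsUnit x := by
  intro hu
  have hnorm := InfinitePlace.prod_eq_abs_norm (x : K)
  rw [← RingOfIntegers.coe_norm, NumberField.isUnit_iff_norm.1 hu, Rat.cast_one] at hnorm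
  have hone (v : InfinitePlace K) : 1 < v x ^ v.mult :=
    one_lt_pow₀ (by rw [← v.norm_embedding_eq]; exact hx _) v.mult_ne_zero
  have hprod : ∏ _v : InfinitePlace K, (1 : ℝ) < ∏ v : InfinitePlace K, v x ^ v.mult :=
    Finset.prod_lt_prod_of_nonempty (fun _ _ => one_pos) (fun v _ => hone v) Finset.univ_nonempty
  simp [hnorm] at hprod

theorem exists_not_isUnit_one_add_mul {α : 𝓞 K} (hα : α ≠ 0) {m : ℕ} (hm : m ≠ 0) :
    ∃ t : ℕ, ¬ IsUnit (1 + (m * t : ℕ) * α) := by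
  have hev (σ : K →+* ℂ) : ∀ᶠ t : ℕ in Filter.atTop, 1 < ‖σ (1 + (m * t : ℕ) * α : 𝓞 K)‖ := by
    have hpos : 0 < ‖σ α‖ := by simpa using hα
    have hm1 : (1 : ℝ) ≤ m := by exact_mod_cast Nat.one_le_iff_ne_zero.2 hm
    filter_upwards [(tendsto_natCast_atTop_atTop.atTop_mul_const hpos).eventually_gt_atTop 2]
      with t ht
    have htri := norm_sub_norm_le ((m * t : ℕ) * σ α) (-1)
    simp only [norm_mul, Complex.norm_natCast, norm_neg, norm_one, sub_neg_eq_add] at htri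
    simp only [map_add, map_mul, map_natCast, map_one, add_comm (1 : ℂ)]
    push_cast at htri ⊢
    have : t * ‖σ α‖ ≤ m * t * ‖σ α‖ := by
      rw [mul_assoc]
      exact le_mul_of_one_le_left (by positivity) hm1
    linarith
  obtain ⟨t, ht⟩ := (Filter.eventually_all.2 hev).exists
  exact ⟨t, not_isUnit_of_one_lt_norm_embeddings ht⟩

theorem exists_sub_intCast_mem_of_mem_conductor {R : Type*} [CommRing R] {I : Ideal R} {p : ℕ}
    (hp : p.Prime) (hpI : (p : R) ∈ I) {α : R} {a d : ℤ} (hα : α - a ∈ I)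
    (hd : (d : R) ∈ conductor ℤ α) (hpd : ¬ (p : ℤ) ∣ d) (x : R) : ∃ m : ℤ, x - m ∈ I := by
  have hadjoin : Algebra.adjoin ℤ {α} ≤
      (⊥ : Subalgebra ℤ (R ⧸ I)).comap (Ideal.Quotient.mkₐ ℤ I) := by
    refine Algebra.adjoin_le (Set.singleton_subset_iff.2 (Algebra.mem_bot.2 ⟨a, ?_⟩))
    simpa using (Ideal.Quotient.eq.2 hα).symm
  obtain ⟨c, hc⟩ := Algebra.mem_bot.1 (hadjoin (mem_conductor_iff.1 hd x))
  have hcx : d * x - c ∈ I := Ideal.Quotient.eq.1 (by simpa using hc.symm)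
  obtain ⟨v, hv⟩ := exists_int_mul_sub_one_mem hp hpI hpd
  refine ⟨v * c, ?_⟩
  convert I.sub_mem (I.mul_mem_left v hcx) (I.mul_mem_right x hv) using 1
  push_cast
  ring

-- A prime factor of a nonunit `1 + m * t * α`, with `m` a factorial, lies over a large `p`, and
-- modulo this factor `α` is the integer `-1 / (m * t)`.
theorem exists_prime_gt_forall_sub_intCast_mem (K : Type*) [Field K] [NumberField K] (M : ℕ) :
    ∃ p, p.Prime ∧ M < p ∧ ∃ P : Ideal (𝓞 K), P.IsPrime ∧ (p : 𝓞 K) ∈ P ∧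
      ∀ x : 𝓞 K, ∃ m : ℤ, x - m ∈ P := by
  obtain ⟨α, hα0, hα⟩ := exists_ne_zero_adjoin_eq_top K
  obtain ⟨d, hd0, hd⟩ := exists_ne_zero_intCast_mem_conductor hα
  set m := (max M d.natAbs).factorial
  obtain ⟨t, ht⟩ := exists_not_isUnit_one_add_mul hα0 (m := m) (Nat.factorial_ne_zero _)
  obtain ⟨P, hPmax, htP⟩ := exists_max_ideal_of_mem_nonunits ht
  have hP := hPmax.isPrime
  obtain ⟨p, hp, hpP⟩ := exists_prime_natCast_mem hP
    (Ring.ne_bot_of_isMaximal_of_not_isField hPmax (RingOfIntegers.not_isField K))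
  have hpt : ¬ (p : ℤ) ∣ (m * t : ℕ) := fun h => hP.one_notMem <| by
    have hmt : ((m * t : ℕ) : 𝓞 K) ∈ P := mod_cast (intCast_mem_iff_dvd hP hp hpP).2 h
    exact (P.add_mem_iff_left (P.mul_mem_right _ hmt)).1 htP
  have hpm : max M d.natAbs < p := by
    by_contra! hle
    exact hpt (mod_cast (hp.dvd_factorial.2 hle).mul_right t)
  have hpd : ¬ (p : ℤ) ∣ d := fun h => ((le_max_right _ _).trans_lt hpm).not_ge <|
    Nat.le_of_dvd (Int.natAbs_pos.2 hd0) (Int.natCast_dvd.1 h)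
  obtain ⟨u, hu⟩ := exists_int_mul_sub_one_mem hp hpP hpt
  have hαu : α - (-u : ℤ) ∈ P := by
    convert P.sub_mem (P.mul_mem_left u htP) (P.mul_mem_right α hu) using 1
    push_cast
    ring
  exact ⟨p, hp, (le_max_left _ _).trans_lt hpm, P, hP, hpP,
    exists_sub_intCast_mem_of_mem_conductor hp hpP hαu hd hpd⟩

end DegreeOne

/-! ### Linear maps reflecting `k`-free elements -/

-- One member has index at most `s.card < p`, while every quotient is killed by `p ^ k`.
theorem exists_eq_top_of_iUnion_eq_univ {G ι : Type*} [AddCommGroup G] {s : Finset ι}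
    {H : ι → AddSubgroup G} {p k : ℕ} (hp : p.Prime) (hs : s.card < p)
    (hH : ∀ i ∈ s, ∀ x : G, p ^ k • x ∈ H i) (hcover : ⋃ i ∈ s, (H i : Set G) = Set.univ) :
    ∃ i ∈ s, H i = ⊤ := by
  obtain ⟨i, hi, hfin, hcard⟩ := AddSubgroup.exists_index_le_card_of_leftCoset_cover
    (s := s) (g := fun _ => 0) (H := H) (by simpa using hcover)
  have hcop : (p ^ k).Coprime (H i).index :=
    (Nat.coprime_of_lt_prime hfin.index_ne_zero (hcard.trans_lt hs) hp).pow_left k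
  refine ⟨i, hi, (AddSubgroup.eq_top_iff' _).2 fun x => ?_⟩
  have hdvd (n : ℕ) (hn : n • x ∈ H i) : addOrderOf (x : G ⧸ H i) ∣ n := by
    rwa [addOrderOf_dvd_iff_nsmul_eq_zero, ← QuotientAddGroup.mk_nsmul,
      QuotientAddGroup.eq_zero_iff]
  rw [← QuotientAddGroup.eq_zero_iff, ← AddMonoid.addOrderOf_eq_one_iff]
  exact Nat.eq_one_of_dvd_coprimes hcop (hdvd _ (hH i hi x)) (hdvd _ ((H i).nsmul_index_mem x))

section KFree

variable {K L : Type*} [Field K] [NumberField K] [Field L] [NumberField L] {k : ℕ}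

theorem exists_add_pow_mul_mem_kfreeSet (K : Type*) [Field K] [NumberField K] (hk : 2 ≤ k) :
    ∃ B : ℕ, ∀ p, p.Prime → B < p → ∀ a : 𝓞 K,
      (∀ Q : Ideal (𝓞 K), Q.IsPrime → (p : 𝓞 K) ∈ Q → a ∉ Q ^ k) →
        ∃ t, a + p ^ k * t ∈ kfreeSet K k := by
  obtain ⟨B, hB⟩ := exists_forall_add_mul_notMem_sq (𝓞 K)
  refine ⟨B, fun p hp hBp a ha => ?_⟩
  have hp_notMem {Q : Ideal (𝓞 K)} (hQ : Q.IsPrime) (hpQ : (p : 𝓞 K) ∈ Q) (t : 𝓞 K) :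
      a + p ^ k * t ∉ Q ^ k := fun h => ha Q hQ hpQ <|
    ((Q ^ k).add_mem_iff_left ((Q ^ k).mul_mem_right t (Ideal.pow_mem_pow hpQ k))).1 h
  obtain ⟨u, v, huv⟩ : IsCoprime ((p : 𝓞 K) ^ k) (B.factorial : 𝓞 K) := by
    exact_mod_cast ((hp.coprime_factorial_of_lt hBp).pow_left k).cast (R := 𝓞 K)
  set N : ℕ := p ^ k * B.factorial
  set b := a + p ^ k * (u * (1 - a))
  have hNb : ¬ (N : 𝓞 K) ∣ b := by
    rintro ⟨c, hc⟩
    obtain ⟨Q, hQ, hpQ⟩ := exists_isPrime_natCast_mem (𝓞 K) hp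
    refine hp_notMem hQ hpQ _ (hc ▸ (Q ^ k).mul_mem_right c ?_)
    simpa [N] using (Q ^ k).mul_mem_right _ (Ideal.pow_mem_pow hpQ k)
  obtain ⟨y, hy⟩ := hB N (fun q hq hqB => (hq.dvd_factorial.2 hqB).mul_left _) b hNb
  refine ⟨u * (1 - a) + B.factorial * y, fun P hP hP0 hmem => ?_⟩
  by_cases hpP : (p : 𝓞 K) ∈ P
  · exact hp_notMem hP hpP _ hmem
  by_cases hBP : (B.factorial : 𝓞 K) ∈ P
  · refine hP.one_notMem ?_
    have hmem' := P.sub_mem (Ideal.pow_le_self (by lia) hmem)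
      (P.mul_mem_left (p ^ k * y - v * (1 - a)) hBP)
    convert hmem' using 1
    linear_combination (a - 1) * huv
  · have hNP : (N : 𝓞 K) ∉ P := by
      simpa [N] using hP.mul_notMem (mt (hP.mem_of_pow_mem k) hpP) hBP
    refine hy P hP hP0 hNP ?_
    convert Ideal.pow_le_pow_right hk hmem using 1
    simp only [b, N]
    push_cast
    ring

theorem exists_mem_pow_of_kfreeSet_subset_image (K L : Type*) [Field K] [NumberField K] [Field L]
    [NumberField L] (hk : 2 ≤ k) :
    ∃ B : ℕ, ∀ A : 𝓞 K ≃ₗ[ℤ] 𝓞 L, kfreeSet L k ⊆ A '' kfreeSet K k →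
      ∀ p, p.Prime → B < p → ∀ P : Ideal (𝓞 K), P.IsPrime → (p : 𝓞 K) ∈ P → ∀ z ∈ P ^ k,
        ∃ Q : Ideal (𝓞 L), Q.IsPrime ∧ (p : 𝓞 L) ∈ Q ∧ A z ∈ Q ^ k := by
  obtain ⟨B, hB⟩ := exists_add_pow_mul_mem_kfreeSet L hk
  refine ⟨B, fun A hA p hp hBp P hP hpP z hz => ?_⟩
  by_contra! hAz
  obtain ⟨t, ht⟩ := hB p hp hBp (A z) hAz
  obtain ⟨c, hc, hct⟩ := hA ht
  have hc_eq : c = z + p ^ k * A.symm t := by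
    apply A.injective
    simp only [hct, map_add, ← Nat.cast_pow, ← nsmul_eq_mul, map_nsmul, A.apply_symm_apply]
  refine hc P hP (ne_bot_of_natCast_mem hp.ne_zero hpP) ?_
  rw [hc_eq]
  exact (P ^ k).add_mem hz ((P ^ k).mul_mem_right _ (Ideal.pow_mem_pow hpP k))

theorem exists_forall_map_mem_pow (K L : Type*) [Field K] [NumberField K] [Field L]
    [NumberField L] (hk : 2 ≤ k) :
    ∃ B : ℕ, ∀ A : 𝓞 K ≃ₗ[ℤ] 𝓞 L, kfreeSet L k ⊆ A '' kfreeSet K k →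
      ∀ p, p.Prime → B < p → ∀ P : Ideal (𝓞 K), P.IsPrime → (p : 𝓞 K) ∈ P →
        ∃ Q : Ideal (𝓞 L), Q.IsPrime ∧ (p : 𝓞 L) ∈ Q ∧ ∀ z ∈ P ^ k, A z ∈ Q ^ k := by
  obtain ⟨B, hB⟩ := exists_mem_pow_of_kfreeSet_subset_image K L hk
  refine ⟨max B (Module.finrank ℤ (𝓞 L)), fun A hA p hp hBp P hP hpP => ?_⟩
  obtain ⟨hBp, hdp⟩ := max_lt_iff.1 hBp
  set S := IsDedekindDomain.primesOverFinset (Ideal.span {(p : ℤ)}) (𝓞 L)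
  have hS {Q : Ideal (𝓞 L)} : Q ∈ S ↔ Q.IsPrime ∧ (p : 𝓞 L) ∈ Q :=
    mem_primesOverFinset_span_iff hp
  let H (Q : Ideal (𝓞 L)) : AddSubgroup (P ^ k : Ideal (𝓞 K)) :=
    (Q ^ k).toAddSubgroup.comap ((A : 𝓞 K →+ 𝓞 L).comp (P ^ k).toAddSubgroup.subtype)
  have hsmul : ∀ Q ∈ S, ∀ z : (P ^ k : Ideal (𝓞 K)), p ^ k • z ∈ H Q := fun Q hQ z => by
    rw [AddSubgroup.mem_comap, map_nsmul, nsmul_eq_mul, Nat.cast_pow]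
    exact (Q ^ k).mul_mem_right _ (Ideal.pow_mem_pow (hS.1 hQ).2 k)
  have hcover : ⋃ Q ∈ S, (H Q : Set (P ^ k : Ideal (𝓞 K))) = Set.univ :=
    Set.eq_univ_of_forall fun z => by
      obtain ⟨Q, hQ, hpQ, hzQ⟩ := hB A hA p hp hBp P hP hpP z z.2
      exact Set.mem_biUnion (hS.2 ⟨hQ, hpQ⟩) hzQ
  obtain ⟨Q, hQS, hQ⟩ := exists_eq_top_of_iUnion_eq_univ hp
    ((card_primesOverFinset_span_le hp).trans_lt hdp) hsmul hcover
  exact ⟨Q, (hS.1 hQS).1, (hS.1 hQS).2, fun z hz => (AddSubgroup.eq_top_iff' _).1 hQ ⟨z, hz⟩⟩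

theorem exists_forall_map_mem (K L : Type*) [Field K] [NumberField K] [Field L]
    [NumberField L] (hk : 2 ≤ k) :
    ∃ B : ℕ, ∀ A : 𝓞 K ≃ₗ[ℤ] 𝓞 L, kfreeSet L k ⊆ A '' kfreeSet K k →
      ∀ p, p.Prime → B < p → ∀ P : Ideal (𝓞 K), P.IsPrime → (p : 𝓞 K) ∈ P →
        ∃ Q : Ideal (𝓞 L), Q.IsPrime ∧ (p : 𝓞 L) ∈ Q ∧ ∀ x ∈ P, A x ∈ Q := by
  obtain ⟨B, hB⟩ := exists_forall_map_mem_pow K L hk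
  refine ⟨max B (discr L).natAbs, fun A hA p hp hBp P hP hpP => ?_⟩
  obtain ⟨hBp, hdp⟩ := max_lt_iff.1 hBp
  obtain ⟨Q, hQ, hpQ, hPQ⟩ := hB A hA p hp hBp P hP hpP
  refine ⟨Q, hQ, hpQ, fun x hx => ?_⟩
  have hp_sq : (p : 𝓞 L) ∉ Q ^ 2 := fun h => hdp.not_ge <|
    Nat.le_of_dvd (Int.natAbs_pos.2 (discr_ne_zero L))
      (Int.natCast_dvd.1 (dvd_discr_of_mem_sq hQ hp h))
  obtain ⟨j, rfl⟩ : ∃ j, k = j + 1 := ⟨k - 1, by lia⟩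
  refine mem_of_pow_mul_mem_pow_succ hQ (ne_bot_of_natCast_mem hp.ne_zero hpQ) hp_sq (j := j) ?_
  have hmem := hPQ (p ^ j * x) (Ideal.mul_mem_mul (Ideal.pow_mem_pow hpP j) hx)
  rwa [← Nat.cast_pow, ← nsmul_eq_mul, map_nsmul, nsmul_eq_mul, Nat.cast_pow] at hmem

theorem map_mul_mul_map_one_of_kfreeSet_subset_image (hk : 2 ≤ k) {A : 𝓞 K ≃ₗ[ℤ] 𝓞 L}
    (hA : kfreeSet L k ⊆ A '' kfreeSet K k) (x y : 𝓞 K) : A (x * y) * A 1 = A x * A y := by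
  obtain ⟨B, hB⟩ := exists_forall_map_mem K L hk
  set w := A (x * y) * A 1 - A x * A y
  by_contra hxy
  obtain ⟨p, hp, hMp, P, hP, hpP, hdeg⟩ :=
    exists_prime_gt_forall_sub_intCast_mem K (max B (Algebra.norm ℤ w).natAbs)
  obtain ⟨hBp, hwp⟩ := max_lt_iff.1 hMp
  obtain ⟨Q, hQ, hpQ, hPQ⟩ := hB A hA p hp hBp P hP hpP
  obtain ⟨m, hm⟩ := hdeg x
  obtain ⟨n, hn⟩ := hdeg y
  have hmap {z : 𝓞 K} {c : ℤ} (hz : z - c ∈ P) : A z - c * A 1 ∈ Q := by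
    have hc : A c = c * A 1 := by simpa using map_zsmul A c 1
    simpa [hc] using hPQ _ hz
  have hmn : x * y - (m * n : ℤ) ∈ P := by
    convert P.add_mem (P.mul_mem_right y hm) (P.mul_mem_left (m : 𝓞 K) hn) using 1
    push_cast
    ring
  have hwQ : w ∈ Q ^ 1 := by
    rw [pow_one]
    convert Q.sub_mem (Q.mul_mem_right (A 1) (hmap hmn)) <|
      Q.add_mem (Q.mul_mem_right (A y) (hmap hm)) (Q.mul_mem_left (m * A 1) (hmap hn)) using 1
    push_cast
    ring
  have hle := pow_le_abs_norm_of_mem_pow hQ hp hpQ hwQ (sub_ne_zero.2 hxy)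
  rw [pow_one, Int.abs_eq_natAbs] at hle
  exact hwp.not_ge (mod_cast hle)

theorem exists_ringEquiv_of_map_mul_mul_map_one {R S : Type*} [CommRing R] [CommRing S]
    (A : R ≃+ S) (hA : ∀ x y, A (x * y) * A 1 = A x * A y) :
    ∃ (σ : R ≃+* S) (u : Sˣ), ∀ x, A x = u * σ x := by
  obtain ⟨r, hr⟩ := A.surjective 1
  let u : Sˣ := .mkOfMulEqOne (A 1) (A (r * r)) (by rw [mul_comm, hA, hr, one_mul])
  let σ : R ≃+ S := A.trans (AddAut.mulLeft u⁻¹)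
  have hσ (x : R) : A x = u * σ x := (u.mul_inv_cancel_left (A x)).symm
  refine ⟨{ σ with map_mul' := fun x y => ?_ }, u, hσ⟩
  have hxy : u * σ (x * y) * u = u * σ x * (u * σ y) := by rw [← hσ, ← hσ, ← hσ]; exact hA x y
  refine (u.isUnit.mul_right_inj.1 (u.isUnit.mul_left_inj.1 ?_) : σ (x * y) = σ x * σ y)
  linear_combination hxy

theorem map_mem_kfreeSet (σ : 𝓞 K ≃+* 𝓞 L) {x : 𝓞 K} (hx : x ∈ kfreeSet K k) :
    σ x ∈ kfreeSet L k := by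
  intro P hP hP0 hmem
  refine hx (P.map σ.symm) (Ideal.map_isPrime_of_equiv σ.symm) ?_ ?_
  · rwa [Ne, Ideal.map_eq_bot_iff_of_injective σ.symm.injective]
  · rw [← Ideal.map_pow]
    simpa using Ideal.mem_map_of_mem σ.symm hmem

theorem map_mem_kfreeSet_iff (σ : 𝓞 K ≃+* 𝓞 L) {x : 𝓞 K} :
    σ x ∈ kfreeSet L k ↔ x ∈ kfreeSet K k :=
  ⟨fun h => by simpa using map_mem_kfreeSet σ.symm h, map_mem_kfreeSet σ⟩

theorem unit_mul_mem_kfreeSet_iff (u : (𝓞 K)ˣ) {x : 𝓞 K} :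
    u * x ∈ kfreeSet K k ↔ x ∈ kfreeSet K k :=
  forall₃_congr fun P _ _ => not_congr (Ideal.unit_mul_mem_iff_mem (P ^ k) u.isUnit)

theorem image_kfreeSet_eq {A : 𝓞 K ≃ₗ[ℤ] 𝓞 L} {τ : K ≃+* L} {ε : (𝓞 L)ˣ}
    (hA : ∀ x : 𝓞 K, (A x : L) = ((ε : 𝓞 L) : L) * τ x) (k : ℕ) :
    A '' kfreeSet K k = kfreeSet L k := by
  have hA' (x : 𝓞 K) : A x = ε * RingOfIntegers.mapRingEquiv τ x :=
    RingOfIntegers.coe_injective ((hA x).trans (by rw [map_mul]; rfl))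
  have hpreimage : kfreeSet K k = A ⁻¹' kfreeSet L k := Set.ext fun x => by
    rw [Set.mem_preimage, hA', unit_mul_mem_kfreeSet_iff, map_mem_kfreeSet_iff]
  rw [hpreimage, Set.image_preimage_eq _ A.surjective]

end KFree

theorem kfree_preserving_iff_general {K L : Type*} [Field K] [NumberField K] [Field L]
    [NumberField L] (k : ℕ) (hk : 2 ≤ k) (A : 𝓞 K ≃ₗ[ℤ] 𝓞 L) :
    kfreeSet L k ⊆ A '' kfreeSet K k ↔
      ∃ (τ : K ≃+* L) (ε : (𝓞 L)ˣ), ∀ x : 𝓞 K, (A x : L) = ((ε : 𝓞 L) : L) * τ x := by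
  refine ⟨fun h => ?_, fun ⟨τ, ε, hA⟩ => (image_kfreeSet_eq hA k).ge⟩
  obtain ⟨σ, ε, hσ⟩ := exists_ringEquiv_of_map_mul_mul_map_one A.toAddEquiv
    (map_mul_mul_map_one_of_kfreeSet_subset_image hk h)
  exact ⟨IsFractionRing.ringEquivOfRingEquiv σ, ε, fun x => by
    simpa using congrArg (algebraMap (𝓞 L) L) (hσ x)⟩

/-- A ℤ-linear bijection `A` of `𝓞 K` preserves the set of `k`-free integers (`k ≥ 2`)
if and only if it is the composition of a field automorphism of `K` with multiplication
by a unit of `𝓞 K`. -/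
theorem kfree_preserving_iff {K : Type*} [Field K] [NumberField K] (k : ℕ) (hk : 2 ≤ k)
    (A : 𝓞 K ≃ₗ[ℤ] 𝓞 K) :
    ⇑A '' kfreeSet K k = kfreeSet K k ↔
      ∃ (τ : K ≃+* K) (ε : (𝓞 K)ˣ),
        ∀ x : 𝓞 K, (A x : K) = ((ε : 𝓞 K) : K) * τ (x : K) :=
  ⟨fun h => (kfree_preserving_iff_general k hk A).1 h.ge, fun ⟨_, _, h⟩ => image_kfreeSet_eq h k⟩
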